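/- arXiv:2403.20243 — 2 statements merged into one kernel-verified Lean document; each statement's English description precedes it below -/
import Mathlib

section
/- Let X be a centered Gaussian random vector in ℝ^N with covariance matrix K, and let A ∈ ℕ with A ≥ 2. Then rank(K) ≥ A if and only if E[‖X‖^{−(A−1)}] < ∞. -/
open MeasureTheory ProbabilityTheory
open scoped RealInnerProductSpace

/-- The covariance matrix `K = E[X Xᵀ]` of a random vector `X : Ω → ℝᴺ`. -/
noncomputable def covMat {Ω : Type*} [MeasurableSpace Ω] (P : Measure Ω) {N : ℕ}
    (X : Ω → EuclideanSpace ℝ (Fin N)) : Matrix (Fin N) (Fin N) ℝ :=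
  Matrix.of fun i j => ∫ ω, X ω i * X ω j ∂P

open Asymptotics Filter Set Topology

/-!
Diagonalise `K`: in an orthonormal eigenbasis the coordinates of `X` are uncorrelated, hence
independent, centered Gaussians. Near `0` each coordinate with nonzero eigenvalue has a positive
continuous density and each of the others vanishes almost surely, so `P(‖X‖ ≤ ε)` is of exact
order `ε ^ rank K`. By the layer-cake formula, `E[‖X‖ ^ (-p)] = ∫₀^∞ P(‖X‖ ≤ t ^ (-1/p)) dt`, whose
integrand is of exact order `t ^ (-rank K / p)` at infinity, so it is finite iff `p < rank K`.
-/

section SmallBall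

variable {Ω : Type*} [MeasurableSpace Ω] {P : Measure Ω}

/-- `R` has small-ball exponent `r` under `P` if `P(R ≤ ε)` is of exact order `ε ^ r` as `ε ↓ 0`. -/
def HasSmallBallExponent (P : Measure Ω) (R : Ω → ℝ) (r : ℝ) : Prop :=
  (fun ε : ℝ => P.real {ω | R ω ≤ ε}) =Θ[𝓝[>] 0] fun ε => ε ^ r

namespace HasSmallBallExponent

variable {R S : Ω → ℝ} {r : ℝ}

lemma isTheta_comp_const_mul (hR : HasSmallBallExponent P R r) {k : ℝ} (hk : 0 < k) :
    (fun ε : ℝ => P.real {ω | R ω ≤ k * ε}) =Θ[𝓝[>] 0] fun ε => ε ^ r := by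
  have htendsto : Tendsto (k * ·) (𝓝[>] 0) (𝓝[>] (0 : ℝ)) :=
    tendsto_nhdsWithin_iff.2
      ⟨by simpa using tendsto_nhdsWithin_of_tendsto_nhds ((continuous_const_mul k).tendsto 0),
        eventually_mem_nhdsWithin.mono fun ε hε => mul_pos hk hε⟩
  have hpow : (fun ε : ℝ => (k * ε) ^ r) =ᶠ[𝓝[>] 0] fun ε => k ^ r * ε ^ r :=
    eventually_mem_nhdsWithin.mono fun ε hε => Real.mul_rpow hk.le (mem_Ioi.1 hε).le
  have hscaled : (fun ε : ℝ => P.real {ω | R ω ≤ k * ε}) =Θ[𝓝[>] 0] fun ε => (k * ε) ^ r :=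
    ⟨hR.1.comp_tendsto htendsto, hR.2.comp_tendsto htendsto⟩
  exact (hscaled.trans_eventuallyEq hpow).trans
    ((isTheta_const_mul_left (Real.rpow_pos_of_pos hk r).ne').2 isTheta_rfl)

lemma of_le_const_mul [IsFiniteMeasure P] (hS : HasSmallBallExponent P S r) {c C : ℝ}
    (hc : 0 < c) (hC : 0 < C) (hSR : ∀ ω, S ω ≤ c * R ω) (hRS : ∀ ω, R ω ≤ C * S ω) :
    HasSmallBallExponent P R r := by
  constructor
  · refine IsBigO.trans (.of_norm_le fun ε => ?_) (hS.isTheta_comp_const_mul hc).1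
    rw [Real.norm_of_nonneg measureReal_nonneg]
    refine measureReal_mono fun ω (hω : R ω ≤ ε) => (hSR ω).trans ?_
    gcongr
  · refine (hS.isTheta_comp_const_mul (inv_pos.2 hC)).2.trans (.of_norm_le fun ε => ?_)
    rw [Real.norm_of_nonneg measureReal_nonneg]
    refine measureReal_mono fun ω (hω : S ω ≤ C⁻¹ * ε) => (hRS ω).trans ?_
    rwa [← le_inv_mul_iff₀ hC]

lemma norm_of_continuousLinearEquiv [IsFiniteMeasure P] {E F : Type*}
    [SeminormedAddCommGroup E] [NormedSpace ℝ E] [SeminormedAddCommGroup F] [NormedSpace ℝ F]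
    (L : E ≃L[ℝ] F) {X : Ω → E} (hLX : HasSmallBallExponent P (fun ω => ‖L (X ω)‖) r) :
    HasSmallBallExponent P (fun ω => ‖X ω‖) r := by
  obtain ⟨c, hc, hL⟩ := (L : E →L[ℝ] F).bound
  obtain ⟨C, hC, hLsymm⟩ := (L.symm : F →L[ℝ] E).bound
  exact hLX.of_le_const_mul hc hC (fun ω => hL (X ω)) fun ω => by simpa using hLsymm (L (X ω))

lemma comp_of_map {E : Type*} [MeasurableSpace E] {Y : Ω → E} {g : E → ℝ}
    (hg : HasSmallBallExponent (P.map Y) g r) (hgm : Measurable g) (hY : AEMeasurable Y P) :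
    HasSmallBallExponent P (fun ω => g (Y ω)) r := by
  have hlaw (ε : ℝ) : (P.map Y).real {y | g y ≤ ε} = P.real {ω | g (Y ω) ≤ ε} :=
    map_measureReal_apply_of_aemeasurable hY (measurableSet_le hgm measurable_const)
  simpa only [HasSmallBallExponent, hlaw] using hg

lemma norm_pi {ι : Type*} [Fintype ι] {E : ι → Type*} [∀ i, NormedAddCommGroup (E i)]
    [∀ i, MeasurableSpace (E i)] [∀ i, OpensMeasurableSpace (E i)] {Y : ∀ i, Ω → E i} {r : ι → ℝ}
    (hindep : iIndepFun Y P) (hY : ∀ i, HasSmallBallExponent P (fun ω => ‖Y i ω‖) (r i)) :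
    HasSmallBallExponent P (fun ω => ‖fun i => Y i ω‖) (∑ i, r i) := by
  have hprod : (fun ε : ℝ => P.real {ω | ‖fun i => Y i ω‖ ≤ ε})
      =ᶠ[𝓝[>] 0] fun ε => ∏ i, P.real {ω | ‖Y i ω‖ ≤ ε} := by
    filter_upwards [self_mem_nhdsWithin] with ε (hε : 0 < ε)
    have hball : {ω | ‖fun i => Y i ω‖ ≤ ε} = ⋂ i, {ω | ‖Y i ω‖ ≤ ε} := by
      ext ω
      simp [pi_norm_le_iff_of_nonneg hε.le]
    simp only [hball, measureReal_def, ← ENNReal.toReal_prod]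
    congr 1
    exact hindep.meas_iInter fun i =>
      ⟨{y | ‖y‖ ≤ ε}, measurableSet_le measurable_norm measurable_const, rfl⟩
  have hpow : (fun ε : ℝ => ∏ i, ε ^ r i) =ᶠ[𝓝[>] 0] fun ε => ε ^ ∑ i, r i :=
    eventually_mem_nhdsWithin.mono fun ε hε => (Real.rpow_sum_of_pos hε r Finset.univ).symm
  exact hprod.trans_isTheta ((IsTheta.finsetProd fun i _ => hY i).trans_eventuallyEq hpow)

end HasSmallBallExponent

lemma lintegral_inv_rpow_eq_lintegral_meas_le {R : Ω → ℝ} (hR : ∀ ω, 0 ≤ R ω)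
    (hRm : AEMeasurable R P) {p : ℝ} (hp : 0 < p) :
    ∫⁻ ω, (ENNReal.ofReal (R ω ^ p))⁻¹ ∂P = ∫⁻ t in Ioi 0, P {ω | R ω ≤ t ^ (-p)⁻¹} := by
  rcases eq_or_ne (P {ω | R ω = 0}) 0 with hnull | hatom
  · have hpos : ∀ᵐ ω ∂P, 0 < R ω := by
      filter_upwards [measure_eq_zero_iff_ae_notMem.1 hnull] with ω hω
      exact (hR ω).lt_of_ne' hω
    calc
      _ = ∫⁻ ω, ENNReal.ofReal (R ω ^ (-p)) ∂P := by
        refine lintegral_congr_ae (hpos.mono fun ω hω => ?_)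
        dsimp only
        rw [Real.rpow_neg hω.le, ENNReal.ofReal_inv_of_pos (Real.rpow_pos_of_pos hω p)]
      _ = ∫⁻ t in Ioi 0, P {ω | t ≤ R ω ^ (-p)} :=
        lintegral_eq_lintegral_meas_le P (.of_forall fun ω => Real.rpow_nonneg (hR ω) _)
          (hRm.pow_const _)
      _ = _ := by
        refine setLIntegral_congr_fun measurableSet_Ioi fun t (ht : 0 < t) =>
          measure_congr (hpos.mono fun ω hω => propext ?_)
        exact (Real.le_rpow_inv_iff_of_neg hω ht (neg_neg_of_pos hp)).symm
  -- An atom of `R` at `0` makes both sides infinite.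
  · have hleft : ∫⁻ ω, (ENNReal.ofReal (R ω ^ p))⁻¹ ∂P = ⊤ := by
      by_contra hfin
      refine hatom (measure_mono_null (fun ω (hω : R ω = 0) => ?_) <|
        measure_eq_top_of_lintegral_ne_top (by fun_prop) hfin)
      simp [hω, hp.ne']
    have hright : ∫⁻ _ in Ioi (0 : ℝ), P {ω | R ω = 0} = ⊤ := by
      simp [hatom]
    refine hleft.trans (top_unique (hright.ge.trans ?_)).symm
    refine setLIntegral_mono' measurableSet_Ioi fun t (ht : 0 < t) =>
      measure_mono fun ω (hω : R ω = 0) => ?_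
    exact hω.trans_le (by positivity)

lemma integrableOn_Ioi_iff_integrableAtFilter_atTop_of_antitoneOn {f : ℝ → ℝ} {a C : ℝ}
    (hf : AntitoneOn f (Ioi a)) (hC : ∀ t ∈ Ioi a, ‖f t‖ ≤ C) :
    IntegrableOn f (Ioi a) ↔ IntegrableAtFilter f atTop := by
  have hnear : IntegrableOn f (Ioc a (a + 1)) :=
    .of_bound (by simp) (aemeasurable_restrict_of_antitoneOn measurableSet_Ioc
      (hf.mono Ioc_subset_Ioi_self)).aestronglyMeasurable C
      ((ae_restrict_mem measurableSet_Ioc).mono fun t ht => hC t (Ioc_subset_Ioi_self ht))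
  have hlocal : LocallyIntegrableOn f (Ioi a) :=
    (locallyIntegrableOn_iff isOpen_Ioi.isLocallyClosed).2 fun k hk hkc =>
      (hf.mono hk).integrableOn_isCompact hkc
  rw [integrableOn_Ioi_iff_integrableAtFilter_atTop_nhdsWithin]
  exact and_iff_left ⟨⟨_, Ioc_mem_nhdsGT (lt_add_one a), hnear⟩, hlocal⟩

lemma integrableAtFilter_iff_of_isTheta {α E F : Type*} [MeasurableSpace α] {μ : Measure α}
    [NormedAddCommGroup E] [NormedAddCommGroup F] {l : Filter α} [IsMeasurablyGenerated l]
    {f : α → E} {g : α → F} (hf : StronglyMeasurableAtFilter f l μ)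
    (hg : StronglyMeasurableAtFilter g l μ) (hfg : f =Θ[l] g) :
    IntegrableAtFilter f l μ ↔ IntegrableAtFilter g l μ :=
  ⟨hfg.2.integrableAtFilter hg, hfg.1.integrableAtFilter hf⟩

namespace HasSmallBallExponent

variable {R : Ω → ℝ} {r p : ℝ}

lemma isTheta_atTop (hR : HasSmallBallExponent P R r) (hp : 0 < p) :
    (fun t : ℝ => P.real {ω | R ω ≤ t ^ (-p)⁻¹}) =Θ[atTop] fun t => t ^ ((-p)⁻¹ * r) := by
  have htendsto : Tendsto (fun t : ℝ => t ^ (-p)⁻¹) atTop (𝓝[>] 0) := by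
    refine tendsto_nhdsWithin_iff.2 ⟨?_, ?_⟩
    · simpa only [inv_neg] using tendsto_rpow_neg_atTop (inv_pos.2 hp)
    · exact (eventually_gt_atTop 0).mono fun t ht => Real.rpow_pos_of_pos ht _
  have hpow : (fun t : ℝ => (t ^ (-p)⁻¹) ^ r) =ᶠ[atTop] fun t => t ^ ((-p)⁻¹ * r) :=
    (eventually_ge_atTop 0).mono fun t ht => (Real.rpow_mul ht _ _).symm
  exact IsTheta.trans_eventuallyEq ⟨hR.1.comp_tendsto htendsto, hR.2.comp_tendsto htendsto⟩ hpow

theorem lintegral_inv_rpow_lt_top_iff [IsFiniteMeasure P] (hr : HasSmallBallExponent P R r)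
    (hR : ∀ ω, 0 ≤ R ω) (hRm : AEMeasurable R P) (hp : 0 < p) :
    ∫⁻ ω, (ENNReal.ofReal (R ω ^ p))⁻¹ ∂P < ⊤ ↔ p < r := by
  set tail : ℝ → ℝ := fun t => P.real {ω | R ω ≤ t ^ (-p)⁻¹} with htail
  have hanti : AntitoneOn tail (Ioi 0) := fun s hs t _ hst =>
    measureReal_mono fun ω hω => hω.trans <|
      Real.rpow_le_rpow_of_nonpos hs hst (inv_nonpos.2 (neg_nonpos.2 hp.le))
  have hmeas : AEStronglyMeasurable tail (volume.restrict (Ioi 0)) :=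
    (aemeasurable_restrict_of_antitoneOn measurableSet_Ioi hanti).aestronglyMeasurable
  calc
    _ ↔ ∫⁻ t in Ioi 0, ENNReal.ofReal (tail t) < ⊤ := by
      simp only [lintegral_inv_rpow_eq_lintegral_meas_le hR hRm hp, htail, measureReal_def, ne_eq,
        measure_ne_top, not_false_eq_true, ENNReal.ofReal_toReal]
    _ ↔ IntegrableOn tail (Ioi 0) := by
      rw [IntegrableOn, Integrable, and_iff_right hmeas,
        hasFiniteIntegral_iff_ofReal (.of_forall fun _ => measureReal_nonneg)]
    _ ↔ IntegrableAtFilter tail atTop :=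
      integrableOn_Ioi_iff_integrableAtFilter_atTop_of_antitoneOn hanti fun t _ =>
        (Real.norm_of_nonneg measureReal_nonneg).trans_le (measureReal_mono (subset_univ _))
    _ ↔ IntegrableAtFilter (fun t : ℝ => t ^ ((-p)⁻¹ * r)) atTop :=
      integrableAtFilter_iff_of_isTheta ⟨_, Ioi_mem_atTop 0, hmeas⟩
        ⟨univ, univ_mem, by fun_prop⟩ (hr.isTheta_atTop hp)
    _ ↔ p < r := by
      rw [integrableAtFilter_rpow_atTop_iff, inv_neg, neg_mul, neg_lt_neg_iff, lt_inv_mul_iff₀ hp,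
        mul_one]

end HasSmallBallExponent

lemma hasDerivAt_integral_neg_self {E : Type*} [NormedAddCommGroup E] [NormedSpace ℝ E]
    [CompleteSpace E] {f : ℝ → E} (hf : Continuous f) (a : ℝ) :
    HasDerivAt (fun ε => ∫ x in (-ε)..ε, f x) (f a + f (-a)) a := by
  have hprimitive (u : ℝ) : HasDerivAt (fun u => ∫ x in 0..u, f x) (f u) u :=
    (hf.integral_hasStrictDerivAt 0 u).hasDerivAt
  have hsub (ε : ℝ) : ∫ x in (-ε)..ε, f x = (∫ x in 0..ε, f x) - ∫ x in 0..(-ε), f x :=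
    (intervalIntegral.integral_interval_sub_left (hf.intervalIntegrable 0 ε)
      (hf.intervalIntegrable 0 (-ε))).symm
  simpa only [hsub, neg_smul, one_smul, sub_neg_eq_add] using!
    (hprimitive a).sub ((hprimitive (-a)).scomp a (hasDerivAt_neg a))

lemma withDensity_real_norm_le {f : ℝ → ℝ} (hf : Measurable f) (hf0 : ∀ x, 0 ≤ f x)
    {ε : ℝ} (hε : 0 ≤ ε) :
    (volume.withDensity fun x => ENNReal.ofReal (f x)).real {x | ‖x‖ ≤ ε} =
      ∫ x in (-ε)..ε, f x := by
  have hIcc : {x : ℝ | ‖x‖ ≤ ε} = Icc (-ε) ε := by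
    ext x
    exact abs_le (a := x) (b := ε)
  rw [hIcc, measureReal_def, withDensity_apply _ measurableSet_Icc,
    intervalIntegral.integral_of_le (by linarith), ← integral_Icc_eq_integral_Ioc,
    integral_eq_lintegral_of_nonneg_ae (.of_forall hf0) (by fun_prop)]

lemma hasSmallBallExponent_norm_withDensity {f : ℝ → ℝ} (hf : Continuous f) (hf0 : ∀ x, 0 ≤ f x)
    (hpos : f 0 ≠ 0) :
    HasSmallBallExponent (volume.withDensity fun x => ENNReal.ofReal (f x)) (fun x => ‖x‖) 1 := by
  have hball :
      (fun ε : ℝ => (volume.withDensity fun x => ENNReal.ofReal (f x)).real {x | ‖x‖ ≤ ε})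
        =ᶠ[𝓝[>] 0] fun ε => ∫ x in (-ε)..ε, f x :=
    eventually_mem_nhdsWithin.mono fun ε hε =>
      withDensity_real_norm_le hf.measurable hf0 (mem_Ioi.1 hε).le
  have hslope : Tendsto (fun ε => (∫ x in (-ε)..ε, f x) / ε ^ (1 : ℝ)) (𝓝[>] 0) (𝓝 (2 * f 0)) := by
    simpa [div_eq_inv_mul, two_mul] using
      (hasDerivAt_integral_neg_self hf 0).tendsto_slope_zero_right
  exact hball.trans_isTheta
    (isTheta_of_div_tendsto_nhds_ne_zero hslope (mul_ne_zero two_ne_zero hpos)).symm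

lemma hasSmallBallExponent_norm_gaussianReal (m : ℝ) {v : NNReal} (hv : v ≠ 0) :
    HasSmallBallExponent (gaussianReal m v) (fun x => ‖x‖) 1 := by
  rw [gaussianReal_of_var_ne_zero m hv]
  have hcont : Continuous (gaussianPDFReal m v) := by
    unfold gaussianPDFReal
    fun_prop
  exact hasSmallBallExponent_norm_withDensity hcont (gaussianPDFReal_nonneg m v)
    (gaussianPDFReal_pos m v 0 hv).ne'

lemma hasSmallBallExponent_norm_dirac_zero {E : Type*} [SeminormedAddCommGroup E]
    [MeasurableSpace E] :
    HasSmallBallExponent (Measure.dirac (0 : E)) (fun x => ‖x‖) 0 := by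
  have hone : (fun ε : ℝ => (Measure.dirac (0 : E)).real {x | ‖x‖ ≤ ε})
      =ᶠ[𝓝[>] 0] fun ε => ε ^ (0 : ℝ) := by
    filter_upwards [self_mem_nhdsWithin] with ε (hε : 0 < ε)
    have hmem : (0 : E) ∈ {x : E | ‖x‖ ≤ ε} := by simpa using hε.le
    simp [measureReal_def, Measure.dirac_apply_of_mem hmem]
  exact hone.trans_isTheta isTheta_rfl

lemma hasSmallBallExponent_norm_of_hasGaussianLaw {Y : Ω → ℝ} (hY : HasGaussianLaw Y P)
    (hmean : P[Y] = 0) :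
    HasSmallBallExponent P (fun ω => ‖Y ω‖) (if Var[Y; P] = 0 then 0 else 1) := by
  refine HasSmallBallExponent.comp_of_map (g := norm) ?_ measurable_norm hY.aemeasurable
  rw [hY.map_eq_gaussianReal, hmean]
  split_ifs with hvar
  · simpa [hvar, gaussianReal_zero_var] using hasSmallBallExponent_norm_dirac_zero
  · refine hasSmallBallExponent_norm_gaussianReal 0 ?_
    exact (Real.toNNReal_pos.2 ((variance_nonneg Y P).lt_of_ne' hvar)).ne'

section CovMat

variable {N : ℕ} {X : Ω → EuclideanSpace ℝ (Fin N)}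

lemma isHermitian_covMat (P : Measure Ω) (X : Ω → EuclideanSpace ℝ (Fin N)) :
    (covMat P X).IsHermitian := by
  ext i j
  simp [covMat, mul_comm]

lemma integral_inner_mul_inner_eq_dotProduct_covMat (hX : MemLp X 2 P)
    (u w : EuclideanSpace ℝ (Fin N)) :
    ∫ ω, ⟪u, X ω⟫ * ⟪w, X ω⟫ ∂P = u.ofLp ⬝ᵥ (covMat P X).mulVec w.ofLp := by
  have hint (i j : Fin N) : Integrable (fun ω => u i * (X ω i * X ω j * w j)) P :=
    (((hX.eval_piLp i).integrable_mul (hX.eval_piLp j)).mul_const (w j)).const_mul (u i)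
  calc
    _ = ∫ ω, ∑ i, ∑ j, u i * (X ω i * X ω j * w j) ∂P := by
      refine integral_congr_ae (.of_forall fun ω => ?_)
      simp only [PiLp.inner_apply, RCLike.inner_apply, conj_trivial, Finset.sum_mul_sum]
      exact Finset.sum_congr rfl fun i _ => Finset.sum_congr rfl fun j _ => by ring
    _ = ∑ i, ∑ j, u i * ((∫ ω, X ω i * X ω j ∂P) * w j) := by
      simp only [integral_finsetSum _ fun i _ => integrable_finsetSum _ fun j _ => hint i j,
        integral_finsetSum _ fun j _ => hint _ j, integral_const_mul, integral_mul_const]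
    _ = _ := by
      simp only [dotProduct, Matrix.mulVec, Finset.mul_sum, covMat, Matrix.of_apply]

lemma covariance_inner_eq_dotProduct_covMat [IsProbabilityMeasure P] (hX : MemLp X 2 P)
    (hmean : P[X] = 0) (u w : EuclideanSpace ℝ (Fin N)) :
    cov[fun ω => ⟪u, X ω⟫, fun ω => ⟪w, X ω⟫; P] = u.ofLp ⬝ᵥ (covMat P X).mulVec w.ofLp := by
  rw [covariance_eq_sub (hX.const_inner u) (hX.const_inner w),
    integral_inner (hX.integrable one_le_two), hmean, inner_zero_right, zero_mul, sub_zero]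
  exact integral_inner_mul_inner_eq_dotProduct_covMat hX u w

lemma covariance_inner_eigenvectorBasis_covMat [IsProbabilityMeasure P] (hX : MemLp X 2 P)
    (hmean : P[X] = 0) (i j : Fin N) :
    cov[fun ω => ⟪(isHermitian_covMat P X).eigenvectorBasis i, X ω⟫,
      fun ω => ⟪(isHermitian_covMat P X).eigenvectorBasis j, X ω⟫; P] =
      if i = j then (isHermitian_covMat P X).eigenvalues j else 0 := by
  set b := (isHermitian_covMat P X).eigenvectorBasis
  have hdot : (b i).ofLp ⬝ᵥ (b j).ofLp = if i = j then 1 else 0 := by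
    rw [← orthonormal_iff_ite.1 b.orthonormal i j]
    simp [PiLp.inner_apply, dotProduct, mul_comm]
  rw [covariance_inner_eq_dotProduct_covMat hX hmean, Matrix.IsHermitian.mulVec_eigenvectorBasis,
    dotProduct_smul, hdot]
  simp

theorem hasSmallBallExponent_norm_rank_covMat (hX : HasGaussianLaw X P) (hmean : P[X] = 0) :
    HasSmallBallExponent P (fun ω => ‖X ω‖) (covMat P X).rank := by
  have := hX.isProbabilityMeasure
  have hK := isHermitian_covMat P X
  let b := hK.eigenvectorBasis
  let coords : EuclideanSpace ℝ (Fin N) ≃L[ℝ] (Fin N → ℝ) :=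
    b.repr.toContinuousLinearEquiv.trans (EuclideanSpace.equiv (Fin N) ℝ)
  have hcoords (ω : Ω) : coords (X ω) = fun i => ⟪b i, X ω⟫ :=
    funext fun i => b.repr_apply_apply (X ω) i
  have hlaw : HasGaussianLaw (fun ω i => ⟪b i, X ω⟫) P := by
    simpa only [hcoords] using hX.map_equiv_fun coords
  have hcov := covariance_inner_eigenvectorBasis_covMat hX.memLp_two hmean
  have hindep : iIndepFun (fun i ω => ⟪b i, X ω⟫) P :=
    hlaw.iIndepFun_of_covariance_eq_zero fun i j hij => (hcov i j).trans (if_neg hij)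
  have hcoord (i : Fin N) : HasSmallBallExponent P (fun ω => ‖⟪b i, X ω⟫‖)
      (if hK.eigenvalues i = 0 then 0 else 1) := by
    have hvar : Var[fun ω => ⟪b i, X ω⟫; P] = hK.eigenvalues i := by
      rw [← covariance_self (hlaw.eval i).aemeasurable, hcov, if_pos rfl]
    rw [← hvar]
    refine hasSmallBallExponent_norm_of_hasGaussianLaw (hlaw.eval i) ?_
    rw [integral_inner hX.integrable, hmean, inner_zero_right]
  have hrank : ((covMat P X).rank : ℝ) = ∑ i, if hK.eigenvalues i = 0 then 0 else 1 := by
    rw [hK.rank_eq_card_non_zero_eigs, Fintype.card_subtype, Finset.card_filter]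
    push_cast
    simp only [ne_eq, ite_not]
  rw [hrank]
  refine .norm_of_continuousLinearEquiv coords ?_
  simpa only [hcoords] using HasSmallBallExponent.norm_pi hindep hcoord

end CovMat

section GaussianLaw

variable {E : Type*} [NormedAddCommGroup E] [InnerProductSpace ℝ E] [CompleteSpace E]
  [MeasurableSpace E] [BorelSpace E] {X : Ω → E}

lemma hasGaussianLaw_of_map_inner_eq_gaussianReal (hX : AEMeasurable X P)
    (h : ∀ u : E, ∃ (m : ℝ) (v : NNReal), P.map (fun ω => ⟪u, X ω⟫) = gaussianReal m v) :
    HasGaussianLaw X P := by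
  refine ⟨isGaussian_of_map_eq_gaussianReal fun L => ?_⟩
  rw [AEMeasurable.map_map_of_aemeasurable (by fun_prop) hX]
  obtain ⟨u, rfl⟩ := (InnerProductSpace.toDual ℝ E).surjective L
  exact h u

lemma integral_eq_zero_of_map_inner_eq_gaussianReal [SecondCountableTopology E]
    (hX : HasGaussianLaw X P)
    (h : ∀ u : E, ∃ v : NNReal, P.map (fun ω => ⟪u, X ω⟫) = gaussianReal 0 v) :
    P[X] = 0 := by
  refine ext_inner_left ℝ fun u => ?_
  obtain ⟨v, hv⟩ := h u
  have hu : AEMeasurable (fun ω => ⟪u, X ω⟫) P := hX.aemeasurable.const_inner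
  rw [inner_zero_right, ← integral_inner hX.integrable]
  simpa only [hv, integral_id_gaussianReal] using
    (integral_map hu (f := fun x => x) (by fun_prop)).symm

end GaussianLaw

theorem stmt4_general {N : ℕ} {X : Ω → EuclideanSpace ℝ (Fin N)} (hX : AEMeasurable X P)
    (hGauss : ∀ u : EuclideanSpace ℝ (Fin N), ∃ v : NNReal,
      P.map (fun ω => ⟪u, X ω⟫) = gaussianReal 0 v)
    {p : ℝ} (hp : 0 < p) :
    p < (covMat P X).rank ↔ ∫⁻ ω, (ENNReal.ofReal (‖X ω‖ ^ p))⁻¹ ∂P < ⊤ := by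
  have hlaw : HasGaussianLaw X P :=
    hasGaussianLaw_of_map_inner_eq_gaussianReal hX fun u => ⟨0, hGauss u⟩
  have hmean : P[X] = 0 := integral_eq_zero_of_map_inner_eq_gaussianReal hlaw hGauss
  have := hlaw.isProbabilityMeasure
  exact ((hasSmallBallExponent_norm_rank_covMat hlaw hmean).lintegral_inv_rpow_lt_top_iff
    (fun ω => norm_nonneg (X ω)) hX.norm hp).symm

end SmallBall

/-- For a centered Gaussian random vector `X` in `ℝᴺ` with covariance
matrix `K`, and `A ≥ 2`: `rank K ≥ A` if and only if `E[‖X‖^{-(A-1)}] < ∞` (the expectation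
being `+∞` whenever `‖X‖ = 0` on a set of positive probability). -/
theorem stmt4 {Ω : Type*} [MeasurableSpace Ω] (P : Measure Ω) [IsProbabilityMeasure P]
    {N : ℕ} (X : Ω → EuclideanSpace ℝ (Fin N)) (hX : Measurable X)
    (hGauss : ∀ u : EuclideanSpace ℝ (Fin N), ∃ v : NNReal,
      P.map (fun ω => ⟪u, X ω⟫) = gaussianReal 0 v)
    (A : ℕ) (hA : 2 ≤ A) :
    A ≤ (covMat P X).rank ↔
      ∫⁻ ω, (ENNReal.ofReal (‖X ω‖ ^ (A - 1)))⁻¹ ∂P < ⊤ := by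
  rw [show A ≤ (covMat P X).rank ↔ ((A - 1 : ℕ) : ℝ) < (covMat P X).rank by norm_cast; omega]
  simpa using stmt4_general hX.aemeasurable hGauss (p := (A - 1 : ℕ)) (Nat.cast_pos.2 (by omega))
end

section
/- Define T : ℝ² → ℝ by T(x, y) = x² − y², and let φ(t) = ℋ¹({p ∈ ℝ² : ‖p‖ ≤ 1 and T(p) = t}) be the length of the level set of T at level t inside the closed unit disk. Then there exist δ > 0 and constants c, C > 0 such that φ is differentiable at every t ∈ (0, δ) and c·t^{−1/2} ≤ −φ'(t) ≤ C·t^{−1/2} for all t ∈ (0, δ). -/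
open MeasureTheory

/-- The length of the level set `{x² − y² = t}` inside the closed unit disk. -/
noncomputable def saddleLevelLength (t : ℝ) : ℝ :=
  (μH[(1 : ℝ)] {p : EuclideanSpace ℝ (Fin 2) |
    ‖p‖ ≤ 1 ∧ p 0 ^ 2 - p 1 ^ 2 = t}).toReal

/-!
The function `x² − y²` is homogeneous of degree two, so the level set at height `t > 0` is a copy,
scaled by `√t`, of the part of the hyperbola `x² − y² = 1` in the disk of radius `R = 1 / √t`. If
`Λ R` is the length of that part, then `φ t = √t * Λ (1 / √t)` and
`-deriv φ t = (R * deriv Λ R - Λ R) / 2 * t ^ (-1 / 2)`. In terms of the ordinate `y`, the speed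
along the hyperbola increases to `√2` with defect at most `1 / (1 + y²)`; monotonicity keeps
`R * deriv Λ R - Λ R` away from zero, and integrability of the defect keeps it bounded.

Lengths are computed with the area formula for an injective `C¹` curve `γ`: strict differentiability
gives the density `‖deriv γ x‖` of `μH[1].comap γ` on small balls around `x`, and the Besicovitch
differentiation theorem integrates it.
-/

open Set Filter Topology Real
open scoped ENNReal NNReal Pointwise

lemma pow_mul_hausdorffMeasure_le_image {X Y : Type*} [MetricSpace X] [MeasurableSpace X]
    [BorelSpace X] [MetricSpace Y] [MeasurableSpace Y] [BorelSpace Y] {f : X → Y} {s : Set X}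
    {c : ℝ≥0} (hc : c ≠ 0) (h : ∀ x ∈ s, ∀ y ∈ s, c * dist x y ≤ dist (f x) (f y))
    {d : ℝ} (hd : 0 ≤ d) : (c : ℝ≥0∞) ^ d * μH[d] s ≤ μH[d] (f '' s) := by
  have hanti : AntilipschitzWith c⁻¹ (s.domRestrict f) := by
    refine AntilipschitzWith.of_le_mul_dist fun x y ↦ ?_
    rw [NNReal.coe_inv, ← div_eq_inv_mul, le_div_iff₀' (by positivity)]
    exact h x x.2 y y.2
  have hsub : μH[d] s = μH[d] (univ : Set s) := by
    rw [← (isometry_subtype_coe (s := s)).hausdorffMeasure_image (.inl hd), image_univ,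
      Subtype.range_coe]
  have hle := hanti.le_hausdorffMeasure_image hd univ
  rw [← hsub, image_univ, range_domRestrict, ENNReal.coe_inv hc, ENNReal.inv_rpow] at hle
  have hpow : (c : ℝ≥0∞) ^ d ≠ 0 := by simp [hc]
  have hpow_top : (c : ℝ≥0∞) ^ d ≠ ∞ := ENNReal.rpow_ne_top_of_nonneg hd ENNReal.coe_ne_top
  rwa [← ENNReal.inv_mul_le_iff (ENNReal.inv_ne_zero.2 hpow_top) (ENNReal.inv_ne_top.2 hpow),
    inv_inv] at hle

section AreaFormula

variable {E : Type*} [NormedAddCommGroup E] [NormedSpace ℝ E]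

lemma exists_nhds_mul_dist_le_dist_of_lt_nnnorm {γ : ℝ → E} {v : E} {x : ℝ} {c : ℝ≥0}
    (hγ : HasStrictDerivAt γ v x) (hc : c < ‖v‖₊) :
    ∃ U ∈ 𝓝 x, ∀ y ∈ U, ∀ z ∈ U, c * dist y z ≤ dist (γ y) (γ z) := by
  obtain ⟨U, hU, happrox⟩ :=
    hγ.hasStrictFDerivAt.approximates_deriv_on_nhds (c := ‖v‖₊ - c) (.inr (tsub_pos_of_lt hc))
  refine ⟨U, hU, fun y hy z hz ↦ ?_⟩
  have hlin : ‖γ y - γ z - (y - z) • v‖ ≤ (‖v‖ - c) * ‖y - z‖ := by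
    simpa [NNReal.coe_sub hc.le] using happrox y hy z hz
  have hsplit := norm_sub_norm_le ((y - z) • v) (γ y - γ z)
  rw [norm_smul, norm_sub_rev _ (γ y - γ z)] at hsplit
  rw [dist_eq_norm, dist_eq_norm]
  linarith

variable [MeasurableSpace E] [BorelSpace E]

lemma eventually_hausdorffMeasure_image_le {γ : ℝ → E} {v : E} {x : ℝ} {K : ℝ≥0}
    (hγ : HasStrictDerivAt γ v x) (hK : ‖v‖₊ < K) :
    ∀ᶠ s in (𝓝 x).smallSets, μH[1] (γ '' s) ≤ K * volume s := by
  obtain ⟨U, hU, hlip⟩ :=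
    hγ.hasStrictFDerivAt.exists_lipschitzOnWith_of_nnnorm_lt K (by simpa using hK)
  filter_upwards [eventually_smallSets_subset.2 hU] with s hs
  simpa [hausdorffMeasure_real] using (hlip.mono hs).hausdorffMeasure_image_le zero_le_one

lemma eventually_mul_volume_le_hausdorffMeasure_image {γ : ℝ → E} {v : E} {x : ℝ} {c : ℝ≥0}
    (hγ : HasStrictDerivAt γ v x) (hc : c < ‖v‖₊) :
    ∀ᶠ s in (𝓝 x).smallSets, c * volume s ≤ μH[1] (γ '' s) := by
  rcases eq_or_ne c 0 with rfl | hc0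
  · simp
  obtain ⟨U, hU, hexpand⟩ := exists_nhds_mul_dist_le_dist_of_lt_nnnorm hγ hc
  filter_upwards [eventually_smallSets_subset.2 hU] with s hs
  simpa [hausdorffMeasure_real] using pow_mul_hausdorffMeasure_le_image hc0
    (fun y hy z hz ↦ hexpand y (hs hy) z (hs hz)) zero_le_one

lemma tendsto_hausdorffMeasure_image_closedBall_div {γ : ℝ → E} {v : E} {x : ℝ}
    (hγ : HasStrictDerivAt γ v x) :
    Tendsto (fun r ↦ μH[1] (γ '' Metric.closedBall x r) / volume (Metric.closedBall x r))
      (𝓝[>] 0) (𝓝 ‖v‖ₑ) := by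
  have hball : Tendsto (Metric.closedBall x) (𝓝[>] 0) (𝓝 x).smallSets :=
    (tendsto_closedBall_smallSets x).mono_left nhdsWithin_le_nhds
  refine tendsto_order.2 ⟨fun a ha ↦ ?_, fun b hb ↦ ?_⟩
  · obtain ⟨c, hac, hcv⟩ := ENNReal.lt_iff_exists_nnreal_btwn.1 ha
    have hlower := eventually_mul_volume_le_hausdorffMeasure_image hγ (by simpa [enorm] using hcv)
    filter_upwards [hball.eventually hlower, self_mem_nhdsWithin] with r hr hr0
    refine hac.trans_le ?_
    rwa [ENNReal.le_div_iff_mul_le (.inl (Metric.measure_closedBall_pos _ _ hr0).ne')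
      (.inl measure_closedBall_lt_top.ne)]
  · obtain ⟨K, hvK, hKb⟩ := ENNReal.lt_iff_exists_nnreal_btwn.1 hb
    have hupper := eventually_hausdorffMeasure_image_le hγ (by simpa [enorm] using hvK)
    filter_upwards [hball.eventually hupper] with r hr
    exact (ENNReal.div_le_of_le_mul hr).trans_lt hKb

theorem comap_hausdorffMeasure_eq_withDensity {γ : ℝ → E} (hγ : ContDiff ℝ 1 γ)
    (hinj : Function.Injective γ) :
    μH[1].comap γ = volume.withDensity fun x ↦ ‖deriv γ x‖ₑ := by
  have hemb : MeasurableEmbedding γ := hγ.continuous.measurableEmbedding hinj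
  have hstrict (x : ℝ) : HasStrictDerivAt γ (deriv γ x) x :=
    hγ.contDiffAt.hasStrictDerivAt one_ne_zero
  have hlip (x : ℝ) : ∀ᶠ s in (𝓝 x).smallSets,
      μH[1].comap γ s ≤ (‖deriv γ x‖₊ + 1 : ℝ≥0) * volume s := by
    simpa only [hemb.comap_apply] using
      eventually_hausdorffMeasure_image_le (hstrict x) (lt_add_one _)
  have hfin : IsLocallyFiniteMeasure (μH[1].comap γ) := by
    refine ⟨fun x ↦ ?_⟩
    obtain ⟨U, hU, hνU⟩ := eventually_smallSets.1
      ((hlip x).and (volume.finiteAt_nhds x).eventually)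
    exact ⟨U, hU, (hνU U subset_rfl).1.trans_lt
      (ENNReal.mul_lt_top ENNReal.coe_lt_top (hνU U subset_rfl).2)⟩
  have hac : μH[1].comap γ ≪ volume := by
    refine fun s hs ↦ measure_null_of_locally_null s fun x _ ↦ ?_
    obtain ⟨U, hU, hνU⟩ := eventually_smallSets.1 (hlip x)
    refine ⟨U ∩ s, inter_mem (mem_nhdsWithin_of_mem_nhds hU) self_mem_nhdsWithin, ?_⟩
    have hUs := hνU (U ∩ s) inter_subset_left
    rwa [measure_inter_null_of_null_right U hs, mul_zero, nonpos_iff_eq_zero] at hUs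
  rw [← Measure.withDensity_rnDeriv_eq _ _ hac]
  refine withDensity_congr_ae ?_
  filter_upwards [Besicovitch.ae_tendsto_rnDeriv (μH[1].comap γ) volume] with x hx
  refine tendsto_nhds_unique hx ?_
  simpa only [hemb.comap_apply] using tendsto_hausdorffMeasure_image_closedBall_div (hstrict x)

theorem toReal_hausdorffMeasure_image_Icc {γ : ℝ → E} (hγ : ContDiff ℝ 1 γ)
    (hinj : Function.Injective γ) {a b : ℝ} (hab : a ≤ b) :
    (μH[1] (γ '' Icc a b)).toReal = ∫ x in a..b, ‖deriv γ x‖ := by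
  rw [← (hγ.continuous.measurableEmbedding hinj).comap_apply,
    comap_hausdorffMeasure_eq_withDensity hγ hinj, withDensity_apply _ measurableSet_Icc,
    ← integral_norm_eq_lintegral_enorm (hγ.continuous_deriv le_rfl).aestronglyMeasurable,
    integral_Icc_eq_integral_Ioc, ← intervalIntegral.integral_of_le hab]

end AreaFormula

section LevelSets

/-- The level set `{x² − y² = t}` inside the closed disk of radius `R`. -/
def saddleLevel (R t : ℝ) : Set (EuclideanSpace ℝ (Fin 2)) :=
  {p | ‖p‖ ≤ R ∧ p 0 ^ 2 - p 1 ^ 2 = t}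

lemma smul_saddleLevel {r : ℝ} (hr : 0 < r) (R t : ℝ) :
    r • saddleLevel R t = saddleLevel (r * R) (r ^ 2 * t) := by
  ext p
  have hlevel : (r⁻¹ * p 0) ^ 2 - (r⁻¹ * p 1) ^ 2 = t ↔ p 0 ^ 2 - p 1 ^ 2 = r ^ 2 * t := by
    rw [mul_pow, mul_pow, ← mul_sub, inv_pow, inv_mul_eq_iff_eq_mul₀ (by positivity)]
  simp only [mem_smul_set_iff_inv_smul_mem₀ hr.ne', saddleLevel, mem_ofPred_eq, norm_smul,
    norm_inv, Real.norm_of_nonneg hr.le, inv_mul_le_iff₀ hr, PiLp.smul_apply, smul_eq_mul, hlevel]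

/-- The length of the hyperbola `{x² − y² = 1}` inside the closed disk of radius `R`. -/
noncomputable def hyperbolaLength (R : ℝ) : ℝ :=
  (μH[1] (saddleLevel R 1)).toReal

lemma saddleLevelLength_eq_sqrt_mul_hyperbolaLength {t : ℝ} (ht : 0 < t) :
    saddleLevelLength t = √t * hyperbolaLength (√t)⁻¹ := by
  have hsqrt : 0 < √t := Real.sqrt_pos.2 ht
  have hscale : saddleLevel 1 t = √t • saddleLevel (√t)⁻¹ 1 := by
    rw [smul_saddleLevel hsqrt, mul_inv_cancel₀ hsqrt.ne', Real.sq_sqrt ht.le, mul_one]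
  change (μH[1] (saddleLevel 1 t)).toReal = _
  rw [hscale, Measure.hausdorffMeasure_smul₀ zero_le_one hsqrt.ne', NNReal.rpow_one,
    ENNReal.toReal_smul, NNReal.smul_def, coe_nnnorm, Real.norm_of_nonneg hsqrt.le, smul_eq_mul,
    hyperbolaLength]

/-- The right branch of the hyperbola `x² − y² = 1`, parametrized by the ordinate `y`. -/
noncomputable def hyperbolaBranch (y : ℝ) : EuclideanSpace ℝ (Fin 2) :=
  !₂[√(1 + y ^ 2), y]

/-- The largest ordinate of a point of the hyperbola `x² − y² = 1` inside the closed disk of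
radius `R`, for `1 ≤ R`. -/
noncomputable def hyperbolaHeight (R : ℝ) : ℝ :=
  √((R ^ 2 - 1) / 2)

lemma mem_image_hyperbolaBranch {U : ℝ} {p : EuclideanSpace ℝ (Fin 2)} :
    p ∈ hyperbolaBranch '' Icc (-U) U ↔ |p 1| ≤ U ∧ p 0 = √(1 + p 1 ^ 2) := by
  constructor
  · rintro ⟨y, hy, rfl⟩
    exact ⟨abs_le.2 hy, rfl⟩
  · rintro ⟨hp1, hp0⟩
    refine ⟨p 1, abs_le.1 hp1, ?_⟩
    ext i
    fin_cases i <;> simp [hyperbolaBranch, hp0]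

lemma mem_saddleLevel_one {R : ℝ} (hR : 1 ≤ R) {p : EuclideanSpace ℝ (Fin 2)} :
    p ∈ saddleLevel R 1 ↔ |p 1| ≤ hyperbolaHeight R ∧ |p 0| = √(1 + p 1 ^ 2) := by
  have hlevel : |p 0| = √(1 + p 1 ^ 2) ↔ p 0 ^ 2 - p 1 ^ 2 = 1 := by
    rw [eq_comm, Real.sqrt_eq_iff_eq_sq (by positivity) (abs_nonneg _), sq_abs, sub_eq_iff_eq_add,
      eq_comm]
  have hdisk : ‖p‖ ≤ R ↔ p 0 ^ 2 + p 1 ^ 2 ≤ R ^ 2 := by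
    rw [← sq_le_sq₀ (norm_nonneg p) (by positivity), EuclideanSpace.real_norm_sq_eq,
      Fin.sum_univ_two]
  have hheight : |p 1| ≤ hyperbolaHeight R ↔ p 1 ^ 2 ≤ (R ^ 2 - 1) / 2 := by
    rw [hyperbolaHeight, Real.le_sqrt (y := (R ^ 2 - 1) / 2) (abs_nonneg _) (by nlinarith), sq_abs]
  rw [hlevel, hheight, saddleLevel, mem_ofPred_eq, hdisk]
  constructor <;> rintro ⟨hineq, heq⟩ <;> exact ⟨by linarith, heq⟩

lemma saddleLevel_one_eq_union_neg {R : ℝ} (hR : 1 ≤ R) :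
    saddleLevel R 1 = hyperbolaBranch '' Icc (-hyperbolaHeight R) (hyperbolaHeight R) ∪
      -(hyperbolaBranch '' Icc (-hyperbolaHeight R) (hyperbolaHeight R)) := by
  ext p
  simp only [mem_saddleLevel_one hR, mem_union, Set.mem_neg, mem_image_hyperbolaBranch,
    PiLp.neg_apply, abs_neg, neg_sq, abs_eq (Real.sqrt_nonneg _), neg_eq_iff_eq_neg, and_or_left]

lemma disjoint_image_hyperbolaBranch_neg (s : Set ℝ) :
    Disjoint (hyperbolaBranch '' s) (-(hyperbolaBranch '' s)) := by
  rw [Set.disjoint_left]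
  rintro _ ⟨y, -, rfl⟩ ⟨z, -, hz⟩
  have habscissa : √(1 + z ^ 2) = -√(1 + y ^ 2) := congrArg (· 0) hz
  have hy : 0 < √(1 + y ^ 2) := by positivity
  have hz : 0 < √(1 + z ^ 2) := by positivity
  linarith

lemma contDiff_hyperbolaBranch : ContDiff ℝ 1 hyperbolaBranch := by
  refine contDiff_euclidean.2 fun i ↦ ?_
  fin_cases i
  · exact (contDiff_const.add (contDiff_id.pow 2)).sqrt fun y ↦ by positivity
  · exact contDiff_id

lemma injective_hyperbolaBranch : Function.Injective hyperbolaBranch :=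
  fun _ _ h ↦ congrArg (· 1) h

/-- The speed of `hyperbolaBranch`, in a closed form that displays its monotone growth to `√2`. -/
noncomputable def hyperbolaSpeed (y : ℝ) : ℝ :=
  √(2 - (1 + y ^ 2)⁻¹)

lemma hasDerivAt_hyperbolaBranch (y : ℝ) :
    HasDerivAt hyperbolaBranch !₂[y / √(1 + y ^ 2), 1] y := by
  have habscissa : HasStrictDerivAt (fun y : ℝ ↦ √(1 + y ^ 2)) (y / √(1 + y ^ 2)) y := by
    refine (((hasStrictDerivAt_pow 2 y).const_add 1).sqrt (by positivity)).congr_deriv ?_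
    push_cast
    ring
  refine HasStrictFDerivAt.hasFDerivAt (hasStrictFDerivAt_euclidean.2 fun i ↦ ?_)
  fin_cases i
  · exact habscissa.hasStrictFDerivAt.congr_fderiv (by ext; simp)
  · exact (hasStrictDerivAt_id y).hasStrictFDerivAt.congr_fderiv (by ext; simp)

lemma norm_deriv_hyperbolaBranch (y : ℝ) : ‖deriv hyperbolaBranch y‖ = hyperbolaSpeed y := by
  rw [(hasDerivAt_hyperbolaBranch y).deriv, EuclideanSpace.norm_eq, hyperbolaSpeed]
  have hsq : √(1 + y ^ 2) ^ 2 = 1 + y ^ 2 := Real.sq_sqrt (by positivity)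
  congr 1
  simp only [Fin.sum_univ_two, Real.norm_eq_abs, sq_abs, Matrix.cons_val_zero,
    Matrix.cons_val_one, div_pow, hsq]
  field_simp
  ring

lemma continuous_hyperbolaSpeed : Continuous hyperbolaSpeed := by
  unfold hyperbolaSpeed
  fun_prop (disch := intros; positivity)

lemma integral_neg_self_of_even {E : Type*} [NormedAddCommGroup E] [NormedSpace ℝ E] {f : ℝ → E}
    (heven : ∀ x, f (-x) = f x) {a : ℝ} (hf : IntervalIntegrable f volume 0 a) :
    ∫ x in -a..a, f x = (2 : ℝ) • ∫ x in 0..a, f x := by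
  have hf_neg : IntervalIntegrable f volume (-a) 0 := by
    simpa [heven] using ((IntervalIntegrable.iff_comp_neg enorm_ne_top).1 hf).symm
  have hneg : ∫ x in -a..0, f x = ∫ x in 0..a, f x := by
    simpa [heven] using (intervalIntegral.integral_comp_neg (a := 0) (b := a) f).symm
  rw [← intervalIntegral.integral_add_adjacent_intervals hf_neg hf, hneg, two_smul]

lemma hyperbolaLength_eq_integral {R : ℝ} (hR : 1 ≤ R) :
    hyperbolaLength R = 4 * ∫ y in 0..hyperbolaHeight R, hyperbolaSpeed y := by
  set U := hyperbolaHeight R with hU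
  have hU0 : 0 ≤ U := Real.sqrt_nonneg _
  set B := hyperbolaBranch '' Icc (-U) U with hB
  have hBcompact : IsCompact B := isCompact_Icc.image contDiff_hyperbolaBranch.continuous
  have hneg : μH[1] (-B) = μH[1] B := by
    rw [← image_neg_eq_neg]
    exact (IsometryEquiv.neg _).hausdorffMeasure_image 1 B
  have hlength : (μH[1] B).toReal = 2 * ∫ y in 0..U, hyperbolaSpeed y := by
    rw [toReal_hausdorffMeasure_image_Icc contDiff_hyperbolaBranch injective_hyperbolaBranch
      (neg_le_self hU0)]
    simp only [norm_deriv_hyperbolaBranch]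
    exact integral_neg_self_of_even (by simp [hyperbolaSpeed])
      (continuous_hyperbolaSpeed.intervalIntegrable 0 U)
  rw [hyperbolaLength, saddleLevel_one_eq_union_neg hR, ← hU, ← hB,
    measure_union' (disjoint_image_hyperbolaBranch_neg _) hBcompact.measurableSet, hneg,
    ← two_mul, ENNReal.toReal_mul, hlength, ENNReal.toReal_ofNat]
  ring

end LevelSets

section Derivative

lemma hasDerivAt_hyperbolaHeight {R : ℝ} (hR : 1 < R) :
    HasDerivAt hyperbolaHeight (R / (2 * hyperbolaHeight R)) R := by
  have hpos : (R ^ 2 - 1) / 2 ≠ 0 := by nlinarith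
  refine ((((hasDerivAt_pow 2 R).sub_const 1).div_const 2).sqrt hpos).congr_deriv ?_
  simp [hyperbolaHeight]

lemma hasDerivAt_hyperbolaLength {R : ℝ} (hR : 1 < R) :
    HasDerivAt hyperbolaLength
      (4 * (hyperbolaSpeed (hyperbolaHeight R) * (R / (2 * hyperbolaHeight R)))) R := by
  have hftc (U : ℝ) : HasDerivAt (fun U ↦ ∫ y in 0..U, hyperbolaSpeed y) (hyperbolaSpeed U) U :=
    continuous_hyperbolaSpeed.integral_hasStrictDerivAt 0 U |>.hasDerivAt
  refine (((hftc _).comp R (hasDerivAt_hyperbolaHeight hR)).const_mul 4).congr_of_eventuallyEq ?_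
  filter_upwards [lt_mem_nhds hR] with S hS using hyperbolaLength_eq_integral hS.le

lemma hasDerivAt_sqrt_mul_comp_inv_sqrt {L : ℝ → ℝ} {L' t : ℝ} (ht : 0 < t)
    (hL : HasDerivAt L L' (√t)⁻¹) :
    HasDerivAt (fun s ↦ √s * L (√s)⁻¹) (-((√t)⁻¹ * L' - L (√t)⁻¹) / 2 * (√t)⁻¹) t := by
  have hsqrt := Real.hasDerivAt_sqrt ht.ne'
  have hpos : √t ≠ 0 := (Real.sqrt_pos.2 ht).ne'
  refine (hsqrt.mul (hL.comp t (hsqrt.inv hpos))).congr_deriv ?_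
  simp only [Function.comp_apply, Pi.inv_apply]
  field_simp
  ring

lemma hasDerivAt_saddleLevelLength {t U : ℝ} (ht0 : 0 < t) (ht1 : t < 1)
    (hU : U = hyperbolaHeight (√t)⁻¹) :
    HasDerivAt saddleLevelLength
      (-(2 * (U * hyperbolaSpeed U - ∫ y in 0..U, hyperbolaSpeed y) + hyperbolaSpeed U / U)
        * (√t)⁻¹) t := by
  have hR : 1 < (√t)⁻¹ :=
    (one_lt_inv₀ (Real.sqrt_pos.2 ht0)).2 (by rwa [Real.sqrt_lt' one_pos, one_pow])
  have hU0 : 0 < U := hU ▸ Real.sqrt_pos.2 (by nlinarith)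
  have hU_sq : U ^ 2 = ((√t)⁻¹ ^ 2 - 1) / 2 := hU ▸ Real.sq_sqrt (by nlinarith)
  have hscaled := hasDerivAt_sqrt_mul_comp_inv_sqrt ht0 (hasDerivAt_hyperbolaLength hR)
  rw [hyperbolaLength_eq_integral hR.le, ← hU] at hscaled
  refine (hscaled.congr_of_eventuallyEq ?_).congr_deriv ?_
  · filter_upwards [lt_mem_nhds ht0] with s hs
    exact saddleLevelLength_eq_sqrt_mul_hyperbolaLength hs
  · generalize (√t)⁻¹ = R at hU_sq
    have hR_sq : R ^ 2 = 1 + 2 * U ^ 2 := by linarith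
    field_simp
    linear_combination (-4 * hyperbolaSpeed U * R) * hR_sq

end Derivative

section Bounds

lemma integral_le_mul_of_monotoneOn {f : ℝ → ℝ} {a b : ℝ} (hab : a ≤ b)
    (hf : MonotoneOn f (Icc a b)) : ∫ x in a..b, f x ≤ (b - a) * f b := by
  calc ∫ x in a..b, f x ≤ ∫ _ in a..b, f b :=
        intervalIntegral.integral_mono_on hab (uIcc_of_le hab ▸ hf).intervalIntegrable
          intervalIntegrable_const fun x hx ↦ hf hx (right_mem_Icc.2 hab) hx.2
    _ = (b - a) * f b := by simp

lemma mul_sub_le_mul_sub_integral_of_monotoneOn {f : ℝ → ℝ} {a b c : ℝ} (hab : a ≤ b)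
    (hbc : b ≤ c) (hf : MonotoneOn f (Icc a c)) :
    (b - a) * (f c - f b) ≤ (c - a) * f c - ∫ x in a..c, f x := by
  have hf_ab : MonotoneOn f (Icc a b) := hf.mono (Icc_subset_Icc_right hbc)
  have hf_bc : MonotoneOn f (Icc b c) := hf.mono (Icc_subset_Icc_left hab)
  have hsplit := intervalIntegral.integral_add_adjacent_intervals (μ := volume)
    (uIcc_of_le hab ▸ hf_ab).intervalIntegrable (uIcc_of_le hbc ▸ hf_bc).intervalIntegrable
  have hle_ab := integral_le_mul_of_monotoneOn hab hf_ab
  have hle_bc := integral_le_mul_of_monotoneOn hbc hf_bc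
  linarith

lemma inv_one_add_sq_le_one (y : ℝ) : (1 + y ^ 2)⁻¹ ≤ 1 :=
  inv_le_one_of_one_le₀ (by nlinarith)

lemma strictMonoOn_hyperbolaSpeed : StrictMonoOn hyperbolaSpeed (Ici 0) := by
  intro y hy z _ hyz
  have := inv_one_add_sq_le_one y
  rw [mem_Ici] at hy
  unfold hyperbolaSpeed
  gcongr
  linarith

lemma hyperbolaSpeed_le_sqrt_two (y : ℝ) : hyperbolaSpeed y ≤ √2 :=
  Real.sqrt_le_sqrt (sub_le_self _ (by positivity))

lemma sqrt_two_sub_hyperbolaSpeed_le (y : ℝ) : √2 - hyperbolaSpeed y ≤ (1 + y ^ 2)⁻¹ := by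
  have hsq : hyperbolaSpeed y ^ 2 = 2 - (1 + y ^ 2)⁻¹ :=
    Real.sq_sqrt (by linarith [inv_one_add_sq_le_one y])
  have hfactor : (√2 - hyperbolaSpeed y) * (√2 + hyperbolaSpeed y) = (1 + y ^ 2)⁻¹ := by
    linear_combination Real.sq_sqrt zero_le_two - hsq
  have hone : 1 ≤ √2 + hyperbolaSpeed y :=
    le_add_of_le_of_nonneg (Real.one_le_sqrt.2 one_le_two) (Real.sqrt_nonneg _)
  rw [← hfactor]
  exact le_mul_of_one_le_right (sub_nonneg.2 (hyperbolaSpeed_le_sqrt_two y)) hone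

lemma mul_hyperbolaSpeed_sub_integral_le {U : ℝ} (hU : 0 ≤ U) :
    U * hyperbolaSpeed U - ∫ y in 0..U, hyperbolaSpeed y ≤ π / 2 := by
  have hint : IntervalIntegrable hyperbolaSpeed volume 0 U :=
    continuous_hyperbolaSpeed.intervalIntegrable 0 U
  calc U * hyperbolaSpeed U - ∫ y in 0..U, hyperbolaSpeed y
      ≤ U * √2 - ∫ y in 0..U, hyperbolaSpeed y := by
        gcongr
        exact hyperbolaSpeed_le_sqrt_two U
    _ = ∫ y in 0..U, (√2 - hyperbolaSpeed y) := by
        rw [intervalIntegral.integral_sub intervalIntegrable_const hint]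
        simp
    _ ≤ ∫ y in 0..U, (1 + y ^ 2)⁻¹ :=
        intervalIntegral.integral_mono_on hU (intervalIntegrable_const.sub hint)
          intervalIntegral.intervalIntegrable_inv_one_add_sq
          fun y _ ↦ sqrt_two_sub_hyperbolaSpeed_le y
    _ = Real.arctan U := by simp
    _ ≤ π / 2 := (Real.arctan_lt_pi_div_two U).le

lemma le_mul_hyperbolaSpeed_sub_integral {U : ℝ} (hU : 2 ≤ U) :
    hyperbolaSpeed 2 - hyperbolaSpeed 1 ≤
      U * hyperbolaSpeed U - ∫ y in 0..U, hyperbolaSpeed y := by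
  have hmono := strictMonoOn_hyperbolaSpeed.monotoneOn
  have hU0 : 0 ≤ U := zero_le_two.trans hU
  have hexcess := mul_sub_le_mul_sub_integral_of_monotoneOn zero_le_one (one_le_two.trans hU)
    (hmono.mono Icc_subset_Ici_self)
  have h2U : hyperbolaSpeed 2 ≤ hyperbolaSpeed U := hmono (mem_Ici.2 zero_le_two) (mem_Ici.2 hU0) hU
  linarith

end Bounds

lemma two_le_hyperbolaHeight_inv_sqrt {t : ℝ} (ht0 : 0 < t) (ht : t ≤ 1 / 9) :
    2 ≤ hyperbolaHeight (√t)⁻¹ := by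
  have hinv : 9 ≤ t⁻¹ := (le_inv_comm₀ (by norm_num) ht0).2 (by simpa using ht)
  refine Real.le_sqrt_of_sq_le ?_
  rw [inv_pow, Real.sq_sqrt ht0.le]
  linarith

/-- For `T(x, y) = x² − y²` and `φ(t)` the `ℋ¹`-length of the level set
`T⁻¹(t)` inside the closed unit disk, there exist `δ > 0` and `c, C > 0` such that `φ`
is differentiable on `(0, δ)` and `c t^{−1/2} ≤ −φ'(t) ≤ C t^{−1/2}` for `t ∈ (0, δ)`. -/
theorem stmt10 :
    ∃ δ > (0 : ℝ), ∃ c > (0 : ℝ), ∃ C > (0 : ℝ), ∀ t ∈ Set.Ioo (0 : ℝ) δ,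
      DifferentiableAt ℝ saddleLevelLength t ∧
      c * t ^ (-(1 / 2) : ℝ) ≤ -deriv saddleLevelLength t ∧
      -deriv saddleLevelLength t ≤ C * t ^ (-(1 / 2) : ℝ) := by
  have hspeed : hyperbolaSpeed 1 < hyperbolaSpeed 2 :=
    strictMonoOn_hyperbolaSpeed (mem_Ici.2 zero_le_one) (mem_Ici.2 zero_le_two) one_lt_two
  refine ⟨1 / 9, by norm_num, 2 * (hyperbolaSpeed 2 - hyperbolaSpeed 1), by linarith, π + √2,
    by positivity, fun t ⟨ht0, ht⟩ ↦ ?_⟩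
  set U := hyperbolaHeight (√t)⁻¹ with hU
  have hU2 : 2 ≤ U := two_le_hyperbolaHeight_inv_sqrt ht0 ht.le
  have hderiv := hasDerivAt_saddleLevelLength ht0 (by linarith) hU
  have hlower := le_mul_hyperbolaSpeed_sub_integral hU2
  have hupper := mul_hyperbolaSpeed_sub_integral_le (zero_le_two.trans hU2)
  have hboundary_nonneg : 0 ≤ hyperbolaSpeed U / U :=
    div_nonneg (Real.sqrt_nonneg _) (by linarith)
  have hboundary_le : hyperbolaSpeed U / U ≤ √2 :=
    (div_le_self (Real.sqrt_nonneg _) (by linarith)).trans (hyperbolaSpeed_le_sqrt_two U)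
  rw [hderiv.deriv, Real.rpow_neg ht0.le, ← Real.sqrt_eq_rpow, neg_mul, neg_neg]
  refine ⟨hderiv.differentiableAt, ?_, ?_⟩ <;> gcongr <;> linarith
end
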